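/- Let σ > 0, let 1 ≤ v ≤ m, let B ⊆ ℒ^{mn} be a ball of radius ρ₀ < 1 with ‖A‖_∞ ≤ σ for all A ∈ B, let μ_{v-1} > 0, and let B'' ⊆ B be a ball such that ‖M_{v-1}(A)‖_∞ > ρ₀ μ_{v-1} M_{v-2}(B'') for every A ∈ B''. Let B' ⊆ B'' be a ball of radius ρ(B') < (1/2) μ_{v-1} ρ(B''), and let A' ∈ B' satisfy ‖M_v(A')‖_∞ < (1/8) M_{v-1}(B'). Assume moreover that the maximum ‖M_{v-1}(A')‖_∞ is attained at the coordinate d_v = det(y_h·C_l(Ā'^*))_{1≤h,l≤v-1}. Then there is a constant K₅(σ) > 0, depending only on m, n and σ, such that ‖∇D_v(A')‖_∞ > K₅(σ) M_{v-1}(B'). -/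

import Mathlib

/-!
Common setup: the field `ℒ = 𝔽((X⁻¹))` of formal Laurent series with coefficients
in a finite field `𝔽` of `k` elements.  We realize `ℒ` as `LaurentSeries 𝔽`
(Hahn series over `ℤ`) in the variable `T = X⁻¹`, so that `X` corresponds to `T⁻¹`
and the polynomial ring `𝔽[X]` corresponds to series supported on nonpositive
exponents.  The absolute value of `x = Σ_{i ≤ N} a_i X^i` (with `a_N ≠ 0`) is
`k^N`, i.e. `k^(-order x)` in terms of the `T`-adic order.
-/

open scoped Classical ENNReal NNReal
open MeasureTheory

noncomputable section

namespace FSBad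

/-- The field `ℒ = 𝔽((X⁻¹))`. -/
abbrev L (𝔽 : Type) [Field 𝔽] : Type := LaurentSeries 𝔽

variable {𝔽 : Type} [Field 𝔽] [Fintype 𝔽]

/-- The absolute value `‖·‖` on `ℒ`: `‖x‖ = k^(deg_X x)`, `‖0‖ = 0`. -/
def lnorm (x : L 𝔽) : ℝ := if x = 0 then 0 else (Fintype.card 𝔽 : ℝ) ^ (-x.order)

/-- Membership in the polynomial ring `𝔽[X] ⊆ ℒ` (polynomials in `X = T⁻¹`). -/
def IsPoly (x : L 𝔽) : Prop := ∀ i : ℤ, 0 < i → x.coeff i = 0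

/-- The height (sup-norm) `‖·‖_∞` on `ℒ^ι`. -/
def vnorm {ι : Type*} (x : ι → L 𝔽) : ℝ := ⨆ i, lnorm (x i)

/-- The closed ball in `ℒ^ι` with centre `c` and radius `ρ`. -/
def vball {ι : Type*} (c : ι → L 𝔽) (ρ : ℝ) : Set (ι → L 𝔽) :=
  {x | vnorm (fun i => x i - c i) ≤ ρ}

/-- `m × n` matrices over `ℒ`, identified with `ℒ^(mn)`. -/
abbrev Mat (𝔽 : Type) [Field 𝔽] (m n : ℕ) : Type := Matrix (Fin m) (Fin n) (L 𝔽)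

/-- The height of a matrix, i.e. the sup-norm on `ℒ^(mn)`. -/
def mnorm {m n : ℕ} (A : Mat 𝔽 m n) : ℝ := ⨆ p : Fin m × Fin n, lnorm (A p.1 p.2)

/-- The closed ball in `ℒ^(mn)` with centre `c` and radius `ρ`. -/
def mball {m n : ℕ} (c : Mat 𝔽 m n) (ρ : ℝ) : Set (Mat 𝔽 m n) :=
  {A | mnorm (A - c) ≤ ρ}

/-- The distance `⟨x⟩` from `x ∈ ℒ^h` to the polynomial lattice `𝔽[X]^h`. -/
def latDist {h : ℕ} (x : Fin h → L 𝔽) : ℝ :=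
  sInf {r : ℝ | ∃ p : Fin h → L 𝔽, (∀ i, IsPoly (p i)) ∧ r = vnorm (fun i => x i - p i)}

/-- The set `𝔅(m,n)` of badly approximable systems of `m` linear forms in `n`
variables over `ℒ`. -/
def Bad (𝔽 : Type) [Field 𝔽] [Fintype 𝔽] (m n : ℕ) : Set (Mat 𝔽 m n) :=
  {A | ∃ K : ℝ, 0 < K ∧ ∀ q : Fin m → L 𝔽, (∀ i, IsPoly (q i)) → q ≠ 0 →
    latDist (Matrix.vecMul q A) ^ n > K / vnorm q ^ m}

/-- The Hausdorff `s`-measure of `E ⊆ ℒ^(mn)`, defined through countable covers by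
balls of radii `< δ`, letting `δ → 0` (the infimum over `δ`-covers is nonincreasing
in `δ`, so the limit is the supremum over `δ > 0`). -/
def hMeasure {m n : ℕ} (s : ℝ) (E : Set (Mat 𝔽 m n)) : ℝ≥0∞ :=
  ⨆ (δ : ℝ) (_ : 0 < δ),
    ⨅ (c : ℕ → Mat 𝔽 m n) (ρ : ℕ → ℝ) (_ : ∀ i, 0 < ρ i ∧ ρ i < δ)
      (_ : E ⊆ ⋃ i, mball (c i) (ρ i)), ∑' i, ENNReal.ofReal (ρ i ^ s)

/-- The Hausdorff dimension of `E ⊆ ℒ^(mn)`. -/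
def hdim {m n : ℕ} (E : Set (Mat 𝔽 m n)) : ℝ :=
  sInf {s : ℝ | 0 ≤ s ∧ hMeasure s E = 0}

/-! ### Schmidt `(α,β)`-games on `ℒ^(mn)` -/

/-- A formal ball: an element of `Ω = ℒ^(mn) × ℝ`. -/
structure FBall (𝔽 : Type) [Field 𝔽] (m n : ℕ) where
  /-- centre -/
  c : Mat 𝔽 m n
  /-- radius -/
  r : ℝ

/-- Formal inclusion of formal balls: `(c₁,ρ₁) ⊆ (c₂,ρ₂)` iff `ρ₁ + ‖c₁ - c₂‖_∞ ≤ ρ₂`. -/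
def FBall.ssub {m n : ℕ} (B₁ B₂ : FBall 𝔽 m n) : Prop :=
  B₁.r + mnorm (B₁.c - B₂.c) ≤ B₂.r

/-- The subset of `ℒ^(mn)` determined by a formal ball. -/
def FBall.toSet {m n : ℕ} (B : FBall 𝔽 m n) : Set (Mat 𝔽 m n) := mball B.c B.r

/-- A strategy for White: given the balls `B₁, …, B_{i+1}` chosen by Black so far,
produce White's next ball. -/
abbrev Strategy (𝔽 : Type) [Field 𝔽] (m n : ℕ) : Type :=
  (i : ℕ) → (Fin (i + 1) → FBall 𝔽 m n) → FBall 𝔽 m n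

/-- White's move at stage `i` when following strategy `str` against Black's balls `B`. -/
def wMove {m n : ℕ} (str : Strategy 𝔽 m n) (B : ℕ → FBall 𝔽 m n) (i : ℕ) : FBall 𝔽 m n :=
  str i fun j => B j.1

/-- Black's move `B_{j+2}` is legal (for parameter `β`): it is a formal subset of
White's ball `W_{j+1}` and has radius `β · ρ(W_{j+1})`. -/
def BlackOk {m n : ℕ} (β : ℝ) (str : Strategy 𝔽 m n) (B : ℕ → FBall 𝔽 m n) (j : ℕ) : Prop :=
  (B (j + 1)).ssub (wMove str B j) ∧ (B (j + 1)).r = β * (wMove str B j).r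

/-- White's move `W_{i+1}` is legal (for parameter `α`): it is a formal subset of
Black's ball `B_{i+1}` and has radius `α · ρ(B_{i+1})`. -/
def WhiteOk {m n : ℕ} (α : ℝ) (str : Strategy 𝔽 m n) (B : ℕ → FBall 𝔽 m n) (i : ℕ) : Prop :=
  (wMove str B i).ssub (B i) ∧ (wMove str B i).r = α * (B i).r

/-- `str` is a winning strategy for White in the `(α,β;S)`-game: against any
sequence of Black balls, White's moves are legal as long as Black has played
legally so far, and if the whole play is legal then the intersection of the
chosen balls is contained in `S`. -/
def WinningStrategy {m n : ℕ} (α β : ℝ) (S : Set (Mat 𝔽 m n)) (str : Strategy 𝔽 m n) : Prop :=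
  ∀ B : ℕ → FBall 𝔽 m n, 0 ≤ (B 0).r →
    (∀ i, (∀ j < i, BlackOk β str B j) → WhiteOk α str B i) ∧
    ((∀ j, BlackOk β str B j) → (⋂ i, (B i).toSet) ⊆ S)

/-- `S` is `(α,β)`-winning. -/
def IsWinningAB {m n : ℕ} (α β : ℝ) (S : Set (Mat 𝔽 m n)) : Prop :=
  ∃ str : Strategy 𝔽 m n, WinningStrategy α β S str

/-- `S` is `α`-winning. -/
def IsWinningA {m n : ℕ} (α : ℝ) (S : Set (Mat 𝔽 m n)) : Prop :=
  ∀ β : ℝ, 0 < β → β < 1 → IsWinningAB α β S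

/-- The winning dimension of `S` (a supremum of a set of reals, which is `0` by
convention when the set is empty). -/
def windim {m n : ℕ} (S : Set (Mat 𝔽 m n)) : ℝ :=
  sSup {α : ℝ | 0 < α ∧ α < 1 ∧ IsWinningA α S}

/-! ### The matrices `Ā`, `Ā^*` and the quantities `M_v`, `D_v`, `∇D_v` -/

/-- `Ā = [[A, I_m], [I_n, 0]]`. Rows are indexed by `Fin m ⊕ Fin n`
(coordinates `q_1, …, q_{m+n}`), columns by `Fin n ⊕ Fin m`. -/
def Abar {m n : ℕ} (A : Mat 𝔽 m n) : Matrix (Fin m ⊕ Fin n) (Fin n ⊕ Fin m) (L 𝔽) :=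
  Matrix.fromBlocks A 1 1 0

/-- `Ā^* = [[Aᵀ, I_n], [I_m, 0]]`. Rows are indexed by `Fin n ⊕ Fin m`,
columns by `Fin m ⊕ Fin n`. -/
def AbarStar {m n : ℕ} (A : Mat 𝔽 m n) : Matrix (Fin n ⊕ Fin m) (Fin m ⊕ Fin n) (L 𝔽) :=
  Matrix.fromBlocks A.transpose 1 1 0

/-- The standard bilinear form `x·y = Σ_i x_i y_i` on `ℒ^ι`. -/
def dotL {ι : Type*} [Fintype ι] (x y : ι → L 𝔽) : L 𝔽 := ∑ i, x i * y i

/-- Strictly increasing `v`-tuples `1 ≤ i_1 < ⋯ < i_v ≤ m`. -/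
def IncTuple (v m : ℕ) : Type := {f : Fin v → Fin m // StrictMono f}

/-- The vector `M_v(A) ∈ ℒ^(C(m,v)²)` of the determinants
`det (y_{i_r} · C_{j_s}(Ā^*))_{1 ≤ r,s ≤ v}` over all strictly increasing index
tuples.  (For `v = 0` every coordinate is an empty determinant, i.e. `1`.) -/
def MvVec {m n : ℕ} (y : Fin m → (Fin n ⊕ Fin m → L 𝔽)) (v : ℕ) (A : Mat 𝔽 m n) :
    IncTuple v m × IncTuple v m → L 𝔽 := fun p =>
  Matrix.det (Matrix.of fun r s : Fin v =>
    dotL (y (p.1.1 r)) fun t => AbarStar A t (Sum.inl (p.2.1 s)))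

/-- `‖M_v(A)‖_∞`. -/
def MvNorm {m n : ℕ} (y : Fin m → (Fin n ⊕ Fin m → L 𝔽)) (v : ℕ) (A : Mat 𝔽 m n) : ℝ :=
  vnorm (MvVec y v A)

/-- `M_v(K) = max_{A ∈ K} ‖M_v(A)‖_∞` for `K ⊆ ℒ^(mn)`. -/
def MvSet {m n : ℕ} (y : Fin m → (Fin n ⊕ Fin m → L 𝔽)) (v : ℕ) (K : Set (Mat 𝔽 m n)) : ℝ :=
  sSup {r : ℝ | ∃ A ∈ K, r = MvNorm y v A}

/-- `D_v(A) = det (y_h · C_l(Ā^*))_{1 ≤ h,l ≤ v}`. -/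
def Dv {m n : ℕ} (y : Fin m → (Fin n ⊕ Fin m → L 𝔽)) (v : ℕ) (hv : v ≤ m)
    (A : Mat 𝔽 m n) : L 𝔽 :=
  Matrix.det (Matrix.of fun h l : Fin v =>
    dotL (y (Fin.castLE hv h)) fun t => AbarStar A t (Sum.inl (Fin.castLE hv l)))

/-- The discrete gradient `∇D_v(A) ∈ ℒ^(mn)`, with coordinates
`D_v(A + E_{ij}) - D_v(A)`. -/
def gradDv {m n : ℕ} (y : Fin m → (Fin n ⊕ Fin m → L 𝔽)) (v : ℕ) (hv : v ≤ m)
    (A : Mat 𝔽 m n) : Fin m × Fin n → L 𝔽 := fun p =>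
  Dv y v hv (A + Matrix.single p.1 p.2 1) - Dv y v hv A

/-- `y_1, …, y_m ∈ ℒ^(m+n)` form an orthonormal system: `y_h · y_{h'} = δ_{h h'}`
and `‖t_1 y_1 + ⋯ + t_m y_m‖_∞ = max_h ‖t_h‖`. -/
def OrthoSystem {m n : ℕ} (y : Fin m → (Fin n ⊕ Fin m → L 𝔽)) : Prop :=
  (∀ h h', dotL (y h) (y h') = if h = h' then 1 else 0) ∧
  (∀ t : Fin m → L 𝔽, vnorm (fun r => ∑ h, t h * y h r) = ⨆ h, lnorm (t h))

/-! ### Distance functions, parallelepipeds and successive minima -/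

/-- The `j`-th successive minimum of a distance function `F` on `ℒ^N`: the infimum
of all `λ > 0` such that `{F < λ}` contains `j` linearly independent points of
`𝔽[X]^N`. -/
def succMin {N : ℕ} (F : (Fin N → L 𝔽) → ℝ) (j : ℕ) : ℝ :=
  sInf {lam : ℝ | 0 < lam ∧ ∃ v : Fin j → (Fin N → L 𝔽),
    (∀ r, ∀ i, IsPoly (v r i)) ∧ LinearIndependent (L 𝔽) v ∧ ∀ r, F (v r) < lam}

/-- The distance function `F_A(x) = max_j c_j⁻¹ ‖Σ_i x_i a_{ij}‖`. -/
def FA {N : ℕ} (A : Matrix (Fin N) (Fin N) (L 𝔽)) (c : Fin N → ℝ)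
    (x : Fin N → L 𝔽) : ℝ :=
  ⨆ j, (c j)⁻¹ * lnorm (∑ i, x i * A i j)

/-- The parallelepiped `P_A(λ) = {x ∈ ℒ^N : F_A(x) < λ}`. -/
def PA {N : ℕ} (A : Matrix (Fin N) (Fin N) (L 𝔽)) (c : Fin N → ℝ) (lam : ℝ) :
    Set (Fin N → L 𝔽) := {x | FA A c x < lam}

/-- The polar distance function `F_A^*(y) = sup_{x ≠ 0} ‖x·y‖ / F_A(x)`. -/
def FAstar {N : ℕ} (A : Matrix (Fin N) (Fin N) (L 𝔽)) (c : Fin N → ℝ)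
    (y : Fin N → L 𝔽) : ℝ :=
  ⨆ x : {x : Fin N → L 𝔽 // x ≠ 0}, lnorm (dotL x.1 y) / FA A c x.1

/-! ### Haar measure, characterized by translation invariance and normalization -/

/-- The Borel σ-algebra on `ℒ^N`, generated by the balls. -/
def vecSigma (𝔽 : Type) [Field 𝔽] [Fintype 𝔽] (N : ℕ) : MeasurableSpace (Fin N → L 𝔽) :=
  MeasurableSpace.generateFrom {s | ∃ c ρ, (0 : ℝ) < ρ ∧ s = vball c ρ}

/-- `μ` is the Haar measure on `ℒ^N`: translation invariant and normalized so that
the unit ball `I^N` has measure `1` (these properties determine it uniquely). -/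
def IsHaarVec {N : ℕ} (μ : @Measure (Fin N → L 𝔽) (vecSigma 𝔽 N)) : Prop :=
  (∀ (v : Fin N → L 𝔽) (s : Set (Fin N → L 𝔽)), μ ((fun x => x + v) ⁻¹' s) = μ s) ∧
  μ {x | ∀ i, lnorm (x i) < 1} = 1

/-- The Borel σ-algebra on `ℒ^(mn)`, generated by the balls. -/
def matSigma (𝔽 : Type) [Field 𝔽] [Fintype 𝔽] (m n : ℕ) : MeasurableSpace (Mat 𝔽 m n) :=
  MeasurableSpace.generateFrom {s | ∃ c ρ, (0 : ℝ) < ρ ∧ s = mball c ρ}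

/-- `μ` is the Haar measure on `ℒ^(mn)`: translation invariant and normalized so
that the unit ball `I^(mn)` has measure `1`. -/
def IsHaarMat {m n : ℕ} (μ : @Measure (Mat 𝔽 m n) (matSigma 𝔽 m n)) : Prop :=
  (∀ (v : Mat 𝔽 m n) (s : Set (Mat 𝔽 m n)), μ ((fun x => x + v) ⁻¹' s) = μ s) ∧
  μ {A | ∀ i j, lnorm (A i j) < 1} = 1

/-! ### The constants of Section 3 -/

/-- `τ = m/(m+n)`. -/
def tau (m n : ℕ) : ℝ := m / (m + n)

/-- `δ = R^(-m(m+n)²)`. -/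
def del (R : ℝ) (m n : ℕ) : ℝ := R ^ (-((m : ℝ) * ((m : ℝ) + n) ^ 2))

/-- `δ* = R^(-n(m+n)²)`. -/
def delStar (R : ℝ) (m n : ℕ) : ℝ := R ^ (-((n : ℝ) * ((m : ℝ) + n) ^ 2))

/-!
Along the row of `A'` paired with the last column of `D_v`, the gradient is the vector of the first
`n` coordinates of `c_1 y_1 + ⋯ + c_v y_v`, where `c` is the vector of cofactors of that column, and
`c_v = d_v`. Pairing the same combination with a column of `Ā'^*` gives a `v × v` minor, and these
pairings recover the remaining `m` coordinates from the first `n`. Since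
`‖c_1 y_1 + ⋯ + c_v y_v‖_∞ = max_h ‖c_h‖ ≥ ‖d_v‖`, either the gradient or `M_v(A')` is large, and
the second is excluded by hypothesis.

It remains to see that `‖M_{v-1}‖_∞` takes its maximum over `B'` at `A'`. Passing from `A'` to
another point of `B'` changes a `(v-1)`-minor by at most `ρ(B') M_{v-2}(B')`, which is less than
`k ‖M_{v-1}(A')‖_∞`. Since the absolute value takes only powers of `k` as nonzero values, the minor
cannot exceed `‖M_{v-1}(A')‖_∞`.
-/

section Nonarchimedean

variable {R S : Type*} [CommRing R] [CommRing S] [LinearOrder S] [IsStrictOrderedRing S]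
  {f : AbsoluteValue R S}

omit [IsStrictOrderedRing S] in
lemma abv_sum_le_of_forall_le (hf : IsNonarchimedean f) {ι : Type*} {s : Finset ι} {x : ι → R}
    {C : S} (hC : 0 ≤ C) (hx : ∀ i ∈ s, f (x i) ≤ C) : f (∑ i ∈ s, x i) ≤ C := by
  obtain rfl | hs := s.eq_empty_or_nonempty
  · simpa using hC
  · exact (hf.apply_sum_le_sup hs).trans (Finset.sup'_le _ _ hx)

lemma abv_sub_le_of_le (hf : IsNonarchimedean f) {x y : R} {C : S} (hx : f x ≤ C)
    (hy : f y ≤ C) : f (x - y) ≤ C := by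
  rw [sub_eq_add_neg]
  exact (hf _ _).trans (max_le hx (by rwa [f.map_neg]))

lemma abv_neg_one_pow_mul [Nontrivial R] (k : ℕ) (x : R) : f ((-1) ^ k * x) = f x := by
  simp [map_mul, map_pow, f.map_neg]

lemma abv_det_le [Nontrivial R] (hf : IsNonarchimedean f) {ι : Type*} [Fintype ι] [DecidableEq ι]
    {P : Matrix ι ι R} {C : S} (hC : 0 ≤ C) (hP : ∀ i j, f (P i j) ≤ C) :
    f P.det ≤ C ^ Fintype.card ι := by
  rw [Matrix.det_apply]
  refine abv_sum_le_of_forall_le hf (by positivity) fun τ _ => ?_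
  rw [f.map_units_int_smul, map_prod]
  exact (Finset.prod_le_prod (fun _ _ => f.nonneg _) fun i _ => hP _ i).trans_eq (by simp)

lemma abv_det_submatrix_equiv [Nontrivial R] {ι κ : Type*} [Fintype κ] [DecidableEq κ]
    (P : Matrix ι ι R) (r s : κ → ι) (τ₁ τ₂ : Equiv.Perm κ) :
    f (P.submatrix (r ∘ τ₁) (s ∘ τ₂)).det = f (P.submatrix r s).det := by
  have h : P.submatrix (r ∘ τ₁) (s ∘ τ₂) = ((P.submatrix r s).submatrix τ₁ id).submatrix id τ₂ :=
    rfl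
  rw [h, Matrix.det_permute', Matrix.det_permute]
  simp [map_mul]

lemma abv_cramer_le [Nontrivial R] (hf : IsNonarchimedean f) {u : ℕ}
    {P : Matrix (Fin (u + 1)) (Fin (u + 1)) R} {b : Fin (u + 1) → R} {ρ M : S} (hρ : 0 ≤ ρ)
    (hM : 0 ≤ M) (hb : ∀ i, f (b i) ≤ ρ) {j : Fin (u + 1)}
    (hP : ∀ i : Fin (u + 1), f (P.submatrix i.succAbove j.succAbove).det ≤ M) :
    f (P.cramer b j) ≤ ρ * M := by
  rw [Matrix.cramer_apply, Matrix.det_succ_column _ j]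
  refine abv_sum_le_of_forall_le hf (by positivity) fun i _ => ?_
  rw [mul_assoc, abv_neg_one_pow_mul, map_mul, Matrix.updateCol_self,
    Matrix.submatrix_updateCol_succAbove]
  exact mul_le_mul (hb i) (hP i) (f.nonneg _) hρ

/-- The matrix whose columns with index in `s` are those of `P`, the others being those of `Q`.
It interpolates between `P` and `Q` one column at a time. -/
def mixCols {α ι κ : Type*} [DecidableEq κ] (s : Finset κ) (P Q : Matrix ι κ α) : Matrix ι κ α :=
  Matrix.of fun i j => if j ∈ s then P i j else Q i j

lemma mixCols_empty {α ι κ : Type*} [DecidableEq κ] (P Q : Matrix ι κ α) : mixCols ∅ P Q = Q := by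
  ext i j
  simp [mixCols]

lemma mixCols_univ {α ι κ : Type*} [DecidableEq κ] [Fintype κ] (P Q : Matrix ι κ α) :
    mixCols Finset.univ P Q = P := by
  ext i j
  simp [mixCols]

lemma det_mixCols_insert_sub {ι : Type*} [Fintype ι] [DecidableEq ι] {s : Finset ι} {a : ι}
    (ha : a ∉ s) (P Q : Matrix ι ι R) :
    (mixCols (insert a s) P Q).det - (mixCols s P Q).det =
      (mixCols s P Q).cramer (fun i => P i a - Q i a) a := by
  have hP : mixCols (insert a s) P Q = (mixCols s P Q).updateCol a fun i => P i a := by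
    ext i j
    by_cases h : j = a <;> simp [mixCols, h]
  have hQ : mixCols s P Q = (mixCols s P Q).updateCol a fun i => Q i a := by
    ext i j
    by_cases h : j = a <;> simp [mixCols, h, ha]
  rw [hP]
  nth_rewrite 2 [hQ]
  rw [← Matrix.cramer_apply, ← Matrix.cramer_apply, ← Pi.sub_apply, ← map_sub]
  rfl

lemma abv_det_sub_det_le [Nontrivial R] (hf : IsNonarchimedean f) {u : ℕ}
    {P Q : Matrix (Fin (u + 1)) (Fin (u + 1)) R} {ρ M : S} (hPQ : ∀ i j, f (P i j - Q i j) ≤ ρ)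
    (hM : ∀ s i j, f ((mixCols s P Q).submatrix (Fin.succAbove i) (Fin.succAbove j)).det ≤ M) :
    f (P.det - Q.det) ≤ ρ * M := by
  have hρ : 0 ≤ ρ := (f.nonneg _).trans (hPQ 0 0)
  have hM₀ : 0 ≤ M := (f.nonneg _).trans (hM ∅ 0 0)
  suffices h : ∀ s, f ((mixCols s P Q).det - Q.det) ≤ ρ * M by
    simpa only [mixCols_univ] using h Finset.univ
  intro s
  induction s using Finset.induction_on with
  | empty => simpa [mixCols_empty] using mul_nonneg hρ hM₀
  | insert a s ha ih =>
    rw [← sub_add_sub_cancel, det_mixCols_insert_sub ha]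
    exact (hf _ _).trans
      (max_le (abv_cramer_le hf hρ hM₀ (fun i => hPQ i a) fun i => hM s i a) ih)

end Nonarchimedean

section AbsoluteValue

omit [Field 𝔽] in
lemma one_lt_card [Nontrivial 𝔽] : (1 : ℝ) < Fintype.card 𝔽 := by
  exact_mod_cast Fintype.one_lt_card

lemma lnorm_nonneg (x : L 𝔽) : 0 ≤ lnorm x := by
  unfold lnorm
  split_ifs <;> positivity

lemma lnorm_of_ne_zero {x : L 𝔽} (hx : x ≠ 0) : lnorm x = (Fintype.card 𝔽 : ℝ) ^ (-x.order) :=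
  if_neg hx

lemma lnorm_eq_zero {x : L 𝔽} : lnorm x = 0 ↔ x = 0 := by
  have := one_lt_card (𝔽 := 𝔽)
  by_cases hx : x = 0
  · simp [lnorm, hx]
  · simpa only [lnorm_of_ne_zero hx, hx, iff_false] using (by positivity)

lemma lnorm_mul (x y : L 𝔽) : lnorm (x * y) = lnorm x * lnorm y := by
  by_cases hx : x = 0
  · simp [lnorm, hx]
  by_cases hy : y = 0
  · simp [lnorm, hy]
  have := one_lt_card (𝔽 := 𝔽)
  rw [lnorm_of_ne_zero hx, lnorm_of_ne_zero hy, lnorm_of_ne_zero (mul_ne_zero hx hy),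
    HahnSeries.order_mul hx hy, neg_add, zpow_add₀ (by positivity)]

lemma isNonarchimedean_lnorm : IsNonarchimedean (lnorm : L 𝔽 → ℝ) := by
  intro x y
  by_cases hx : x = 0
  · simp [hx]
  by_cases hy : y = 0
  · simp [hy]
  by_cases hxy : x + y = 0
  · exact le_max_of_le_left ((lnorm_eq_zero.2 hxy).trans_le (lnorm_nonneg x))
  have hk := one_lt_card (𝔽 := 𝔽)
  rw [lnorm_of_ne_zero hx, lnorm_of_ne_zero hy, lnorm_of_ne_zero hxy]
  rcases min_le_iff.1 (HahnSeries.min_order_le_order_add hxy) with h | h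
  · exact le_max_of_le_left (zpow_le_zpow_right₀ hk.le (neg_le_neg h))
  · exact le_max_of_le_right (zpow_le_zpow_right₀ hk.le (neg_le_neg h))

/-- The absolute value `‖·‖` on `ℒ`, bundled so that results on absolute values apply to it. -/
def lnormAbv : AbsoluteValue (L 𝔽) ℝ where
  toFun := lnorm
  map_mul' := lnorm_mul
  nonneg' := lnorm_nonneg
  eq_zero' _ := lnorm_eq_zero
  add_le' x y := (isNonarchimedean_lnorm x y).trans
    (max_le_add_of_nonneg (lnorm_nonneg x) (lnorm_nonneg y))

lemma lnorm_sum_le {ι : Type*} {s : Finset ι} {x : ι → L 𝔽} {C : ℝ} (hC : 0 ≤ C)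
    (hx : ∀ i ∈ s, lnorm (x i) ≤ C) : lnorm (∑ i ∈ s, x i) ≤ C :=
  abv_sum_le_of_forall_le (f := lnormAbv) isNonarchimedean_lnorm hC hx

lemma lnorm_sub_le {x y : L 𝔽} {C : ℝ} (hx : lnorm x ≤ C) (hy : lnorm y ≤ C) :
    lnorm (x - y) ≤ C :=
  abv_sub_le_of_le (f := lnormAbv) isNonarchimedean_lnorm hx hy

lemma card_mul_lnorm_le_of_lt {x y : L 𝔽} (h : lnorm x < lnorm y) :
    Fintype.card 𝔽 * lnorm x ≤ lnorm y := by
  by_cases hx : x = 0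
  · simpa [lnorm_eq_zero.2 hx] using lnorm_nonneg y
  have hy : y ≠ 0 := fun hy => ((lnorm_nonneg x).trans_lt h).ne' (lnorm_eq_zero.2 hy)
  have hk := one_lt_card (𝔽 := 𝔽)
  rw [lnorm_of_ne_zero hx, lnorm_of_ne_zero hy] at *
  rw [zpow_lt_zpow_iff_right₀ hk] at h
  rw [← zpow_one_add₀ (by positivity)]
  exact zpow_le_zpow_right₀ hk.le (by lia)

lemma exists_lnorm_le_lt_card_mul {r : ℝ} (hr : 0 < r) :
    ∃ t : L 𝔽, lnorm t ≤ r ∧ r < Fintype.card 𝔽 * lnorm t := by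
  have hk := one_lt_card (𝔽 := 𝔽)
  obtain ⟨e, he, he'⟩ := exists_mem_Ico_zpow hr hk
  refine ⟨HahnSeries.single (-e) 1, ?_⟩
  rw [lnorm_of_ne_zero (by simp), HahnSeries.order_single one_ne_zero, neg_neg,
    ← zpow_one_add₀ (by positivity), add_comm]
  exact ⟨he, he'⟩

end AbsoluteValue

section Height

variable {ι κ : Type*}

lemma vnorm_nonneg (x : ι → L 𝔽) : 0 ≤ vnorm x :=
  Real.iSup_nonneg fun _ => lnorm_nonneg _

lemma lnorm_le_vnorm [Finite ι] (x : ι → L 𝔽) (i : ι) : lnorm (x i) ≤ vnorm x :=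
  le_ciSup (f := fun i => lnorm (x i)) (Set.finite_range _).bddAbove i

lemma vnorm_le {x : ι → L 𝔽} {C : ℝ} (hC : 0 ≤ C) (hx : ∀ i, lnorm (x i) ≤ C) : vnorm x ≤ C :=
  Real.iSup_le hx hC

lemma lnorm_le_vnorm_of_lt_card_mul [Finite ι] {x : L 𝔽} {d : ι → L 𝔽}
    (h : lnorm x < Fintype.card 𝔽 * vnorm d) : lnorm x ≤ vnorm d := by
  by_contra! hlt
  have hk : (0 : ℝ) < Fintype.card 𝔽 := one_pos.trans one_lt_card
  refine h.not_ge ((le_div_iff₀' hk).1 (vnorm_le (by have := lnorm_nonneg x; positivity) ?_))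
  exact fun i => (le_div_iff₀' hk).2
    (card_mul_lnorm_le_of_lt ((lnorm_le_vnorm d i).trans_lt hlt))

/-- The family `y` satisfies `‖Σ_h t_h y_h‖_∞ = ‖t‖_∞` for all `t`: the second half of
`OrthoSystem`. -/
def IsNormOrthogonal [Fintype ι] (y : ι → κ → L 𝔽) : Prop :=
  ∀ t : ι → L 𝔽, vnorm (fun r => ∑ h, t h * y h r) = vnorm t

variable [Fintype ι] {y : ι → κ → L 𝔽}

lemma IsNormOrthogonal.lnorm_le_one [Finite κ] (hy : IsNormOrthogonal y) (h : ι) (r : κ) :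
    lnorm (y h r) ≤ 1 := by
  have hsingle : vnorm (Pi.single h 1 : ι → L 𝔽) ≤ 1 := by
    refine vnorm_le zero_le_one fun i => ?_
    by_cases hi : i = h <;> simp [lnorm, hi]
  have hnorm := hy (Pi.single h 1)
  simp only [Pi.single_apply, ite_mul, one_mul, zero_mul, Finset.sum_ite_eq',
    Finset.mem_univ, if_true] at hnorm
  exact (lnorm_le_vnorm (y h) r).trans (hnorm.trans_le hsingle)

lemma IsNormOrthogonal.lnorm_le_vnorm_sum (hy : IsNormOrthogonal y) {ι' : Type*} [Fintype ι']
    {e : ι' → ι} (he : e.Injective) (c : ι' → L 𝔽) (i : ι') :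
    lnorm (c i) ≤ vnorm fun r => ∑ i, c i * y (e i) r := by
  have hext : ∀ r, ∑ i, c i * y (e i) r = ∑ h, Function.extend e c 0 h * y h r := fun r =>
    Fintype.sum_of_injective e he _ _
      (fun h hh => by rw [Function.extend_apply' _ _ _ hh, Pi.zero_apply, zero_mul])
      fun i => by rw [he.extend_apply]
  simp only [hext]
  rw [hy, ← he.extend_apply c 0 i]
  exact lnorm_le_vnorm _ (e i)

end Height

section MatrixBalls

variable {m n : ℕ} {A B c c₀ : Mat 𝔽 m n} {r r₀ : ℝ}

lemma mnorm_nonneg (A : Mat 𝔽 m n) : 0 ≤ mnorm A :=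
  Real.iSup_nonneg fun _ => lnorm_nonneg _

lemma lnorm_le_mnorm (A : Mat 𝔽 m n) (i : Fin m) (j : Fin n) : lnorm (A i j) ≤ mnorm A :=
  lnorm_le_vnorm (fun p : Fin m × Fin n => A p.1 p.2) (i, j)

lemma mnorm_le {C : ℝ} (hC : 0 ≤ C) (hA : ∀ i j, lnorm (A i j) ≤ C) : mnorm A ≤ C :=
  vnorm_le hC fun p => hA p.1 p.2

lemma radius_nonneg_of_mem_mball (hA : A ∈ mball c r) : 0 ≤ r :=
  (mnorm_nonneg _).trans hA

lemma mem_mball_iff (hr : 0 ≤ r) : A ∈ mball c r ↔ ∀ i j, lnorm (A i j - c i j) ≤ r :=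
  ⟨fun hA i j => (lnorm_le_mnorm (A - c) i j).trans hA, fun hA => mnorm_le hr hA⟩

lemma mnorm_sub_le_of_mem_mball (hA : A ∈ mball c r) (hB : B ∈ mball c r) : mnorm (A - B) ≤ r := by
  have hr := radius_nonneg_of_mem_mball hA
  rw [mem_mball_iff hr] at hA hB
  refine mnorm_le hr fun i j => ?_
  simpa using lnorm_sub_le (hA i j) (hB i j)

/-- The matrix whose rows with index in `s` are those of `A`, the others being those of `B`. These
are the matrices through which the `v`-minors of `A` and `B` are compared. -/
def mixRows (s : Finset (Fin m)) (A B : Mat 𝔽 m n) : Mat 𝔽 m n :=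
  Matrix.of fun i j => if i ∈ s then A i j else B i j

lemma mixRows_mem_mball (hA : A ∈ mball c r) (hB : B ∈ mball c r) (s : Finset (Fin m)) :
    mixRows s A B ∈ mball c r := by
  have hr := radius_nonneg_of_mem_mball hA
  rw [mem_mball_iff hr] at hA hB ⊢
  intro i j
  by_cases hi : i ∈ s
  · simpa [mixRows, hi] using hA i j
  · simpa [mixRows, hi] using hB i j

-- The radius of a ball is not determined by its set of points, as `‖·‖` takes only the values `kⁱ`.
lemma radius_lt_card_mul_of_mball_subset (hm : 0 < m) (hn : 0 < n) (hr : 0 < r)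
    (h : mball c r ⊆ mball c₀ r₀) : r < Fintype.card 𝔽 * r₀ := by
  obtain ⟨t, ht, hrt⟩ := exists_lnorm_le_lt_card_mul (𝔽 := 𝔽) hr
  have hc : c ∈ mball c₀ r₀ := h ((mem_mball_iff hr.le).2 fun i j => by simp [lnorm, hr.le])
  have hct : c + Matrix.of (fun _ _ => t) ∈ mball c₀ r₀ :=
    h ((mem_mball_iff hr.le).2 fun i j => by simpa using ht)
  have htr₀ : lnorm t ≤ r₀ := by
    simpa using (lnorm_le_mnorm _ ⟨0, hm⟩ ⟨0, hn⟩).trans (mnorm_sub_le_of_mem_mball hct hc)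
  exact hrt.trans_le (by gcongr)

end MatrixBalls

section Minors

variable {m n : ℕ} {y : Fin m → Fin n ⊕ Fin m → L 𝔽} {A B c : Mat 𝔽 m n} {r σ : ℝ} {u v : ℕ}

/-- The matrix `(y_h · C_l(Ā^*))_{1 ≤ h,l ≤ m}`, whose `v × v` minors are the coordinates of
`M_v(A)`. Its `l`-th column depends only on the `l`-th row of `A`. -/
def pairing (y : Fin m → Fin n ⊕ Fin m → L 𝔽) (A : Mat 𝔽 m n) : Matrix (Fin m) (Fin m) (L 𝔽) :=
  Matrix.of fun h l => dotL (y h) fun t => AbarStar A t (Sum.inl l)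

omit [Fintype 𝔽] in
lemma pairing_apply (y : Fin m → Fin n ⊕ Fin m → L 𝔽) (A : Mat 𝔽 m n) (h l : Fin m) :
    pairing y A h l = ∑ j, y h (Sum.inl j) * A l j + y h (Sum.inr l) := by
  simp [pairing, dotL, AbarStar, Fintype.sum_sum_type, Matrix.one_apply]

omit [Fintype 𝔽] in
lemma pairing_mixRows (y : Fin m → Fin n ⊕ Fin m → L 𝔽) (A B : Mat 𝔽 m n) (s : Finset (Fin m)) :
    pairing y (mixRows s A B) = mixCols s (pairing y A) (pairing y B) := by
  refine Matrix.ext fun h l => ?_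
  by_cases hl : l ∈ s <;> simp [mixCols, mixRows, pairing_apply, hl]

lemma lnorm_pairing_le (hy : IsNormOrthogonal y) (A : Mat 𝔽 m n) (h l : Fin m) :
    lnorm (pairing y A h l) ≤ max 1 (mnorm A) := by
  rw [pairing_apply]
  refine (isNonarchimedean_lnorm _ _).trans (max_le (lnorm_sum_le (by positivity) fun j _ => ?_)
    (le_max_of_le_left (hy.lnorm_le_one _ _)))
  rw [lnorm_mul]
  exact le_max_of_le_right ((mul_le_of_le_one_left (lnorm_nonneg _) (hy.lnorm_le_one _ _)).trans
    (lnorm_le_mnorm A l j))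

lemma lnorm_pairing_sub_le (hy : IsNormOrthogonal y) (A B : Mat 𝔽 m n) (h l : Fin m) :
    lnorm (pairing y A h l - pairing y B h l) ≤ mnorm (A - B) := by
  rw [pairing_apply, pairing_apply, add_sub_add_right_eq_sub, ← Finset.sum_sub_distrib]
  refine lnorm_sum_le (mnorm_nonneg _) fun j _ => ?_
  rw [← mul_sub, lnorm_mul]
  exact (mul_le_of_le_one_left (lnorm_nonneg _) (hy.lnorm_le_one _ _)).trans
    (lnorm_le_mnorm (A - B) l j)

instance (v m : ℕ) : Finite (IncTuple v m) := Subtype.finite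

lemma MvNorm_nonneg (y : Fin m → Fin n ⊕ Fin m → L 𝔽) (v : ℕ) (A : Mat 𝔽 m n) :
    0 ≤ MvNorm y v A :=
  vnorm_nonneg _

lemma MvNorm_zero_eq (y : Fin m → Fin n ⊕ Fin m → L 𝔽) (A B : Mat 𝔽 m n) :
    MvNorm y 0 A = MvNorm y 0 B := by
  unfold MvNorm MvVec
  simp only [Matrix.det_fin_zero]

lemma lnorm_det_submatrix_le_MvNorm (y : Fin m → Fin n ⊕ Fin m → L 𝔽) (A : Mat 𝔽 m n)
    (a b : Fin v → Fin m) : lnorm ((pairing y A).submatrix a b).det ≤ MvNorm y v A := by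
  have hdet : ∀ i j, i ≠ j → a i = a j ∨ b i = b j →
      lnorm ((pairing y A).submatrix a b).det ≤ MvNorm y v A := by
    intro i j hij h
    have h0 : ((pairing y A).submatrix a b).det = 0 := by
      rcases h with h | h
      · exact Matrix.det_zero_of_row_eq hij (by ext l; simp [h])
      · exact Matrix.det_zero_of_column_eq hij fun l => by simp [h]
    exact (lnorm_eq_zero.2 h0).trans_le (MvNorm_nonneg y v A)
  by_cases ha : a.Injective
  · by_cases hb : b.Injective
    · have sorted : ∀ {g : Fin v → Fin m}, g.Injective → StrictMono (g ∘ Tuple.sort g) :=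
        fun hg => (Tuple.monotone_sort _).strictMono_of_injective
          (hg.comp (Tuple.sort _).injective)
      have h := abv_det_submatrix_equiv (f := lnormAbv) (pairing y A) a b (Tuple.sort a)
        (Tuple.sort b)
      exact h.symm.trans_le (lnorm_le_vnorm (MvVec y v A) (⟨_, sorted ha⟩, ⟨_, sorted hb⟩))
    · obtain ⟨i, j, h, hij⟩ := Function.not_injective_iff.1 hb
      exact hdet i j hij (.inr h)
  · obtain ⟨i, j, h, hij⟩ := Function.not_injective_iff.1 ha
    exact hdet i j hij (.inl h)

lemma MvNorm_le_pow (hy : IsNormOrthogonal y) (v : ℕ) (A : Mat 𝔽 m n) :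
    MvNorm y v A ≤ max 1 (mnorm A) ^ v := by
  refine vnorm_le (by positivity) fun p => ?_
  have h := abv_det_le (f := lnormAbv) (P := (pairing y A).submatrix p.1.1 p.2.1)
    isNonarchimedean_lnorm (by positivity) fun i j => lnorm_pairing_le hy A (p.1.1 i) (p.2.1 j)
  rwa [Fintype.card_fin] at h

lemma MvSet_nonneg (y : Fin m → Fin n ⊕ Fin m → L 𝔽) (v : ℕ) (K : Set (Mat 𝔽 m n)) :
    0 ≤ MvSet y v K :=
  Real.sSup_nonneg (by rintro _ ⟨A, _, rfl⟩; exact MvNorm_nonneg y v A)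

lemma MvNorm_le_MvSet (hy : IsNormOrthogonal y) {K : Set (Mat 𝔽 m n)}
    (hK : ∀ A ∈ K, mnorm A ≤ σ) (hA : A ∈ K) : MvNorm y v A ≤ MvSet y v K := by
  refine le_csSup ⟨max 1 σ ^ v, ?_⟩ ⟨A, hA, rfl⟩
  rintro _ ⟨B, hB, rfl⟩
  exact (MvNorm_le_pow hy v B).trans (by gcongr; exact hK B hB)

lemma MvSet_mono (hy : IsNormOrthogonal y) {K K' : Set (Mat 𝔽 m n)} (hKK' : K ⊆ K')
    (hK' : ∀ A ∈ K', mnorm A ≤ σ) : MvSet y v K ≤ MvSet y v K' :=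
  Real.sSup_le (by rintro _ ⟨A, hA, rfl⟩; exact MvNorm_le_MvSet hy hK' (hKK' hA))
    (MvSet_nonneg y v K')

lemma lnorm_MvVec_sub_le (hy : IsNormOrthogonal y) {M : ℝ}
    (hM : ∀ s : Finset (Fin m), MvNorm y u (mixRows s A B) ≤ M)
    (p : IncTuple (u + 1) m × IncTuple (u + 1) m) :
    lnorm (MvVec y (u + 1) A p - MvVec y (u + 1) B p) ≤ mnorm (A - B) * M := by
  refine abv_det_sub_det_le (f := lnormAbv) isNonarchimedean_lnorm
    (fun i j => lnorm_pairing_sub_le hy A B (p.1.1 i) (p.2.1 j)) fun s i j => ?_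
  have hmix : mixCols s ((pairing y A).submatrix p.1.1 p.2.1)
      ((pairing y B).submatrix p.1.1 p.2.1) =
        (pairing y (mixRows (s.image p.2.1) A B)).submatrix p.1.1 p.2.1 := by
    rw [pairing_mixRows]
    refine Matrix.ext fun a b => ?_
    simp [mixCols, p.2.2.injective.eq_iff]
  refine le_trans ?_ (hM (s.image p.2.1))
  have := lnorm_det_submatrix_le_MvNorm y (mixRows (s.image p.2.1) A B) (p.1.1 ∘ i.succAbove)
    (p.2.1 ∘ j.succAbove)
  rwa [← Matrix.submatrix_submatrix, ← hmix] at this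

lemma MvNorm_succ_le_of_mul_lt (hy : IsNormOrthogonal y) {M : ℝ}
    (hM : ∀ s : Finset (Fin m), MvNorm y u (mixRows s A B) ≤ M)
    (hlt : mnorm (A - B) * M < Fintype.card 𝔽 * MvNorm y (u + 1) B) :
    MvNorm y (u + 1) A ≤ MvNorm y (u + 1) B := by
  refine vnorm_le (MvNorm_nonneg _ _ _) fun p => ?_
  rw [← sub_add_cancel (MvVec y (u + 1) A p) (MvVec y (u + 1) B p)]
  exact (isNonarchimedean_lnorm _ _).trans (max_le
    (lnorm_le_vnorm_of_lt_card_mul ((lnorm_MvVec_sub_le hy hM p).trans_lt hlt))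
    (lnorm_le_vnorm _ p))

lemma MvSet_le_MvNorm (hy : IsNormOrthogonal y) (hσ : ∀ A ∈ mball c r, mnorm A ≤ σ)
    (hA : A ∈ mball c r)
    (hr : r * MvSet y (v - 1) (mball c r) < Fintype.card 𝔽 * MvNorm y v A) :
    MvSet y v (mball c r) ≤ MvNorm y v A := by
  refine Real.sSup_le ?_ (MvNorm_nonneg y v A)
  rintro _ ⟨B, hB, rfl⟩
  cases v with
  | zero => exact (MvNorm_zero_eq y B A).le
  | succ u =>
    refine MvNorm_succ_le_of_mul_lt hy
      (fun s => MvNorm_le_MvSet hy hσ (mixRows_mem_mball hB hA s)) (lt_of_le_of_lt ?_ hr)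
    exact mul_le_mul_of_nonneg_right (mnorm_sub_le_of_mem_mball hB hA) (MvSet_nonneg _ _ _)

end Minors

section Gradient

variable {m n : ℕ} {y : Fin m → Fin n ⊕ Fin m → L 𝔽}

/-- The submatrix `(y_h · C_l(Ā^*))_{1 ≤ h,l ≤ v}`, with determinant `D_v(A)`. -/
def leadingBlock (y : Fin m → Fin n ⊕ Fin m → L 𝔽) {v : ℕ} (hv : v ≤ m) (A : Mat 𝔽 m n) :
    Matrix (Fin v) (Fin v) (L 𝔽) :=
  (pairing y A).submatrix (Fin.castLE hv) (Fin.castLE hv)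

omit [Fintype 𝔽] in
lemma adjugate_leadingBlock_last (y : Fin m → Fin n ⊕ Fin m → L 𝔽) {w : ℕ} (hw : w + 1 ≤ m)
    (A : Mat 𝔽 m n) :
    (leadingBlock y hw A).adjugate (Fin.last w) (Fin.last w) =
      Dv y w (w.le_succ.trans hw) A := by
  rw [Matrix.adjugate_fin_succ_eq_det_submatrix, Even.neg_one_pow ⟨_, rfl⟩, one_mul,
    Fin.succAbove_last]
  rfl

omit [Fintype 𝔽] in
lemma leadingBlock_add_single (y : Fin m → Fin n ⊕ Fin m → L 𝔽) {v : ℕ} (hv : v ≤ m)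
    (A : Mat 𝔽 m n) (l : Fin v) (j : Fin n) :
    leadingBlock y hv (A + Matrix.single (Fin.castLE hv l) j 1) =
      (leadingBlock y hv A).updateCol l
        ((fun h => leadingBlock y hv A h l) + fun h => y (Fin.castLE hv h) (Sum.inl j)) := by
  refine Matrix.ext fun h k => ?_
  by_cases hk : k = l
  · simp [leadingBlock, pairing_apply, hk, mul_add, Finset.sum_add_distrib, Matrix.single_apply]
    ring
  · have hne : Fin.castLE hv l ≠ Fin.castLE hv k := by simpa using Ne.symm hk
    simp [leadingBlock, pairing_apply, hk, hne]

omit [Fintype 𝔽] in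
lemma gradDv_castLE (y : Fin m → Fin n ⊕ Fin m → L 𝔽) {v : ℕ} (hv : v ≤ m) (A : Mat 𝔽 m n)
    (l : Fin v) (j : Fin n) :
    gradDv y v hv A (Fin.castLE hv l, j) =
      ∑ h, (leadingBlock y hv A).adjugate l h * y (Fin.castLE hv h) (Sum.inl j) := by
  change (leadingBlock y hv (A + _)).det - (leadingBlock y hv A).det = _
  rw [leadingBlock_add_single, Matrix.det_updateCol_add, Matrix.updateCol_eq_self,
    add_sub_cancel_left, ← Matrix.cramer_apply, Matrix.cramer_eq_adjugate_mulVec]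
  rfl

lemma lnorm_adjugate_pairing_le_MvNorm (y : Fin m → Fin n ⊕ Fin m → L 𝔽) {v : ℕ} (hv : v ≤ m)
    (A : Mat 𝔽 m n) (l : Fin v) (k : Fin m) :
    lnorm (∑ h, (leadingBlock y hv A).adjugate l h * pairing y A (Fin.castLE hv h) k) ≤
      MvNorm y v A := by
  have hcol : (leadingBlock y hv A).updateCol l (fun h => pairing y A (Fin.castLE hv h) k) =
      (pairing y A).submatrix (Fin.castLE hv) (Function.update (Fin.castLE hv) l k) := by
    refine Matrix.ext fun i j => ?_
    by_cases hj : j = l <;> simp [leadingBlock, hj]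
  have h := lnorm_det_submatrix_le_MvNorm y A (Fin.castLE hv) (Function.update (Fin.castLE hv) l k)
  rwa [← hcol, ← Matrix.cramer_apply, Matrix.cramer_eq_adjugate_mulVec] at h

omit [Fintype 𝔽] in
lemma sum_mul_inr_eq_sub {ι : Type*} [Fintype ι] (y : Fin m → Fin n ⊕ Fin m → L 𝔽)
    (A : Mat 𝔽 m n) (e : ι → Fin m) (a : ι → L 𝔽) (k : Fin m) :
    ∑ h, a h * y (e h) (Sum.inr k) =
      ∑ h, a h * pairing y A (e h) k - ∑ j, (∑ h, a h * y (e h) (Sum.inl j)) * A k j := by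
  simp only [pairing_apply, mul_add, Finset.sum_add_distrib, Finset.mul_sum, Finset.sum_mul]
  rw [Finset.sum_comm (s := (Finset.univ : Finset (Fin n)))]
  simp only [mul_assoc, add_sub_cancel_left]

lemma lnorm_adjugate_le (hy : IsNormOrthogonal y) {v : ℕ} (hv : v ≤ m) (A : Mat 𝔽 m n)
    (l h : Fin v) :
    lnorm ((leadingBlock y hv A).adjugate l h) ≤
      max (max 1 (mnorm A) * vnorm (gradDv y v hv A)) (MvNorm y v A) := by
  set a := (leadingBlock y hv A).adjugate l
  set G := vnorm (gradDv y v hv A)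
  have hG : 0 ≤ G := vnorm_nonneg _
  have hinl : ∀ j, lnorm (∑ h, a h * y (Fin.castLE hv h) (Sum.inl j)) ≤ G := fun j => by
    rw [← gradDv_castLE]
    exact lnorm_le_vnorm _ _
  refine (hy.lnorm_le_vnorm_sum (Fin.castLE_injective hv) a h).trans
    (vnorm_le (by positivity) ?_)
  rintro (j | k)
  · exact le_max_of_le_left ((hinl j).trans (le_mul_of_one_le_left hG (le_max_left _ _)))
  · rw [sum_mul_inr_eq_sub y A]
    refine lnorm_sub_le (le_max_of_le_right (lnorm_adjugate_pairing_le_MvNorm y hv A l k))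
      (le_max_of_le_left (lnorm_sum_le (by positivity) fun j _ => ?_))
    rw [lnorm_mul, mul_comm]
    exact mul_le_mul ((lnorm_le_mnorm A k j).trans (le_max_right _ _)) (hinl j) (lnorm_nonneg _)
      (by positivity)

end Gradient

theorem grad_positive_general {m n : ℕ} {y : Fin m → Fin n ⊕ Fin m → L 𝔽}
    (hy : IsNormOrthogonal y) {w : ℕ} (hw : w + 1 ≤ m) {c A : Mat 𝔽 m n} {r σ : ℝ}
    (hσ : ∀ A ∈ mball c r, mnorm A ≤ σ) (hA : A ∈ mball c r)
    (hr : r * MvSet y (w - 1) (mball c r) < Fintype.card 𝔽 * MvNorm y w A)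
    (hlt : MvNorm y (w + 1) A < MvSet y w (mball c r))
    (hmax : MvNorm y w A = lnorm (Dv y w (w.le_succ.trans hw) A)) :
    MvSet y w (mball c r) ≤ max 1 σ * vnorm (gradDv y (w + 1) hw A) := by
  have hsup : MvSet y w (mball c r) ≤ MvNorm y w A := MvSet_le_MvNorm hy hσ hA hr
  have hgrad := lnorm_adjugate_le hy hw A (Fin.last w) (Fin.last w)
  rw [adjugate_leadingBlock_last, ← hmax] at hgrad
  have hMv : MvNorm y w A ≤ max 1 (mnorm A) * vnorm (gradDv y (w + 1) hw A) :=
    (le_max_iff.1 hgrad).resolve_right (hlt.trans_le hsup).not_ge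
  exact hsup.trans (hMv.trans (mul_le_mul_of_nonneg_right (max_le_max_left 1 (hσ A hA))
    (vnorm_nonneg _)))

lemma mul_MvSet_lt_card_mul_MvNorm {m n : ℕ} (hm : 0 < m) (hn : 0 < n)
    {y : Fin m → Fin n ⊕ Fin m → L 𝔽} (hy : IsNormOrthogonal y) {v w : ℕ} {c₀ c'' c' A : Mat 𝔽 m n}
    {ρ₀ ρ'' ρ' μ σ : ℝ} (hμ : 0 < μ) (hσ : ∀ A ∈ mball c'' ρ'', mnorm A ≤ σ)
    (hB'' : mball c'' ρ'' ⊆ mball c₀ ρ₀) (hB' : mball c' ρ' ⊆ mball c'' ρ'')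
    (hA : A ∈ mball c' ρ') (hM : ρ₀ * μ * MvSet y v (mball c'' ρ'') < MvNorm y w A)
    (hρ' : ρ' < μ * ρ'') :
    ρ' * MvSet y v (mball c' ρ') < Fintype.card 𝔽 * MvNorm y w A := by
  have hρ'₀ : 0 ≤ ρ' := radius_nonneg_of_mem_mball hA
  have hρ''₀ : 0 < ρ'' := pos_of_mul_pos_right (hρ'₀.trans_lt hρ') hμ.le
  have hρ'' := radius_lt_card_mul_of_mball_subset hm hn hρ''₀ hB''
  have : (0 : ℝ) < Fintype.card 𝔽 := one_pos.trans one_lt_card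
  have hM₀ := MvSet_nonneg y v (mball c'' ρ'')
  calc ρ' * MvSet y v (mball c' ρ')
      ≤ ρ' * MvSet y v (mball c'' ρ'') := by gcongr; exact MvSet_mono hy hB' hσ
    _ ≤ μ * (Fintype.card 𝔽 * ρ₀) * MvSet y v (mball c'' ρ'') := by
      gcongr
      exact hρ'.le.trans (by gcongr)
    _ = Fintype.card 𝔽 * (ρ₀ * μ * MvSet y v (mball c'' ρ'')) := by ring
    _ < Fintype.card 𝔽 * MvNorm y w A := by gcongr

/-- **Theorem (Statement 10).** (Lemma `gradpositiv`.)  Under the stated conditions,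
if `‖M_v(A')‖_∞ < (1/8) M_{v-1}(B')` and the maximum `‖M_{v-1}(A')‖_∞` is attained at
the coordinate `d_v` (the leading `(v-1) × (v-1)` minor), then
`‖∇D_v(A')‖_∞ > K₅(σ) M_{v-1}(B')`. -/
theorem grad_positive (𝔽 : Type) [Field 𝔽] [Fintype 𝔽] (m n : ℕ)
    (hm : 0 < m) (hn : 0 < n) (σ : ℝ) (hσ : 0 < σ) :
    ∃ K₅ : ℝ, 0 < K₅ ∧
      ∀ (y : Fin m → (Fin n ⊕ Fin m → L 𝔽)), OrthoSystem y →
      ∀ (v : ℕ) (_ : 1 ≤ v) (hv : v ≤ m),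
      ∀ (c₀ : Mat 𝔽 m n) (ρ₀ : ℝ), 0 < ρ₀ → ρ₀ < 1 →
        (∀ A ∈ mball c₀ ρ₀, mnorm A ≤ σ) →
      ∀ (μprev : ℝ), 0 < μprev →
      ∀ (c'' : Mat 𝔽 m n) (ρ'' : ℝ), mball c'' ρ'' ⊆ mball c₀ ρ₀ →
        (∀ A ∈ mball c'' ρ'',
          ρ₀ * μprev * MvSet y (v - 2) (mball c'' ρ'') < MvNorm y (v - 1) A) →
      ∀ (c' : Mat 𝔽 m n) (ρ' : ℝ), ρ' < (1 / 2) * μprev * ρ'' →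
        mball c' ρ' ⊆ mball c'' ρ'' →
      ∀ A' ∈ mball c' ρ',
        MvNorm y v A' < (1 / 8) * MvSet y (v - 1) (mball c' ρ') →
        MvNorm y (v - 1) A' = lnorm (MvVec y (v - 1) A'
          (⟨Fin.castLE ((Nat.sub_le v 1).trans hv), fun _ _ hab => hab⟩,
           ⟨Fin.castLE ((Nat.sub_le v 1).trans hv), fun _ _ hab => hab⟩)) →
        K₅ * MvSet y (v - 1) (mball c' ρ') < vnorm (gradDv y v hv A') := by
  refine ⟨1 / (2 * max 1 σ), by positivity, ?_⟩
  intro y hy v hv₁ hv c₀ ρ₀ _ _ hσB μ hμ c'' ρ'' hB'' hM c' ρ' hρ' hB' A' hA' hlt hmax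
  obtain ⟨w, rfl⟩ := Nat.exists_eq_add_of_le' hv₁
  simp only [Nat.add_sub_cancel] at hlt ⊢
  have hρ'₀ : 0 ≤ ρ' := radius_nonneg_of_mem_mball hA'
  have hMv₀ : 0 ≤ MvNorm y (w + 1) A' := MvNorm_nonneg y _ A'
  have hσ'' : ∀ A ∈ mball c'' ρ'', mnorm A ≤ σ := fun A hA => hσB A (hB'' hA)
  have hsmall := mul_MvSet_lt_card_mul_MvNorm hm hn hy.2 hμ hσ'' hB'' hB' hA' (hM A' (hB' hA'))
    (by linarith)
  have hgrad := grad_positive_general hy.2 hv (fun A hA => hσ'' A (hB' hA)) hA' hsmall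
    (by linarith) hmax
  rw [one_div, inv_mul_lt_iff₀ (by positivity)]
  linarith

end FSBad
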